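/- Let S be an addable abstract numeration system and let x ∈ {0,1}^ℕ be S-automatic. Then the set P_{111}(W(O(x))) ⊆ ℕ³ is S-recognizable, where P_{111}(W(O(x))) is the set of strictly increasing triples (a, b, c) such that the infinite word over ℕ having letter 1 exactly at positions a, b, c and letter 0 elsewhere belongs to the winning shift W(O(x)). -/

import Mathlib

open scoped BigOperators

/-- A language is regular if it is accepted by a DFA with finitely many states. -/
def IsRegularLang {α : Type*} (L : Set (List α)) : Prop :=
  ∃ (σ : Type) (_ : Fintype σ) (M : DFA α σ), ∀ w : List α, w ∈ M.accepts ↔ w ∈ L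

/-- Pad a word over `A` to length `M` by prepending the padding symbol `none`. -/
def padOne {A : Type*} (M : ℕ) (w : List A) : List (Option A) :=
  List.replicate (M - w.length) none ++ w.map some

/-- The padded form of a `d`-tuple of words over `A`, as a word over `(A ∪ {#})^d`. -/
def padTuple {A : Type*} {d : ℕ} (ws : Fin d → List A) : List (Fin d → Option A) :=
  List.ofFn fun j : Fin (Finset.univ.sup fun i : Fin d => (ws i).length) =>
    fun i : Fin d =>
      (padOne (Finset.univ.sup fun i : Fin d => (ws i).length) (ws i)).getD j.val none

/-- An abstract numeration system over the alphabet `A`, encoded by the order isomorphism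
`rep : ℕ → L ⊆ A*` enumerating its (infinite) language in increasing order. -/
structure ANS (A : Type*) where
  rep : ℕ → List A
  inj : Function.Injective rep

/-- A set `Y ⊆ ℕ^d` is `S`-recognizable if the padded representations of its members form
a regular language. -/
def ANS.Recognizable {A : Type*} (S : ANS A) {d : ℕ} (Y : Set (Fin d → ℕ)) : Prop :=
  IsRegularLang { w : List (Fin d → Option A) | ∃ t ∈ Y, w = padTuple fun i => S.rep (t i) }

/-- An ANS is addable if the graph of addition is `S`-recognizable. -/
def ANS.Addable {A : Type*} (S : ANS A) : Prop :=
  S.Recognizable { t : Fin 3 → ℕ | t 0 + t 1 = t 2 }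

/-- An ANS is comparable if the relation `≤` is `S`-recognizable. -/
def ANS.Comparable {A : Type*} (S : ANS A) : Prop :=
  S.Recognizable { t : Fin 2 → ℕ | t 0 ≤ t 1 }

/-- An ANS is regular if `ℕ` (i.e. its language) is `S`-recognizable. -/
def ANS.IsRegularANS {A : Type*} (S : ANS A) : Prop :=
  S.Recognizable (Set.univ : Set (Fin 1 → ℕ))

/-- The unary ANS, with language `0*` ordered by length. -/
def unaryANS : ANS Unit where
  rep := fun n => List.replicate n ()
  inj := fun m n h => by simpa using congrArg List.length h

/-- `x` is `S`-automatic: some DFAO outputs `x n` on input `rep_S n`. -/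
def SAutomatic {A C : Type*} (S : ANS A) (x : ℕ → C) : Prop :=
  ∃ (Q : Type) (_ : Fintype Q) (M : DFA A Q) (τ : Q → C),
    ∀ n : ℕ, τ (M.eval (S.rep n)) = x n

/-- The shift map on one-sided infinite words. -/
def shiftMap {C : Type*} (x : ℕ → C) : ℕ → C := fun n => x (n + 1)

/-- The orbit closure of `x` (closure in the product topology over the discrete alphabet):
`y` belongs to it iff every finite prefix of `y` occurs in `x`. -/
def orbitClosure {C : Type*} (x : ℕ → C) : Set (ℕ → C) :=
  { y | ∀ n : ℕ, ∃ m : ℕ, ∀ i < n, y i = x (m + i) }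

/-- A subshift: a shift-invariant subset of `C^ℕ` that is closed in the product topology
over the discrete alphabet (expressed combinatorially). -/
def IsSubshift {C : Type*} (X : Set (ℕ → C)) : Prop :=
  (∀ x ∈ X, shiftMap x ∈ X) ∧
  ∀ y : ℕ → C, (∀ n : ℕ, ∃ x ∈ X, ∀ i < n, y i = x i) → y ∈ X

/-- The language of a set of infinite words: all finite factors of its elements. -/
def LangOf {C : Type*} (X : Set (ℕ → C)) : Set (List C) :=
  { w | ∃ x ∈ X, ∃ p : ℕ, w = List.ofFn fun i : Fin w.length => x (p + i) }

/-- A word is right special in (the language of) `X` if it has two distinct one-letter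
extensions in the language of `X`. -/
def RightSpecial {C : Type*} (X : Set (ℕ → C)) (w : List C) : Prop :=
  ∃ a b : C, a ≠ b ∧ w ++ [a] ∈ LangOf X ∧ w ++ [b] ∈ LangOf X

/-- The factor complexity of `x`: the number of distinct factors of length `n`. -/
noncomputable def factorComplexity {C : Type*} (x : ℕ → C) (n : ℕ) : ℕ :=
  Set.ncard { w : List C | ∃ p : ℕ, w = List.ofFn fun i : Fin n => x (p + i) }

/-- `T` is a strategy tree witnessing `α ∈ W(X)`: a prefix-closed set of finite words
containing the empty word, in which every word of length `i` has exactly `α i + 1`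
one-letter extensions, and all whose infinite branches lie in `X`. -/
def IsStrategyTree {C : Type*} (X : Set (ℕ → C)) (α : ℕ → ℕ) (T : Set (List C)) : Prop :=
  ([] : List C) ∈ T ∧
  (∀ u v : List C, u ++ v ∈ T → u ∈ T) ∧
  (∀ w ∈ T, Set.ncard { c : C | w ++ [c] ∈ T } = α w.length + 1) ∧
  (∀ y : ℕ → C, (∀ n : ℕ, (List.ofFn fun i : Fin n => y i) ∈ T) → y ∈ X)

/-- The winning shift of `X ⊆ C^ℕ`, a subset of `ℕ^ℕ`. -/
def winningShift {C : Type*} (X : Set (ℕ → C)) : Set (ℕ → ℕ) :=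
  { α | ∃ T : Set (List C), IsStrategyTree X α T }

/-- Membership in the winning set of a set `X` of finite words, defined recursively:
`ε ∈ W(X)` iff `ε ∈ X`, and `a :: α ∈ W(X)` iff there is a set of `a + 1` letters `c`
such that `α` is in the winning set of the left quotient of `X` by `c`. -/
def winningSetMem {C : Type*} : List ℕ → Set (List C) → Prop
  | [], X => [] ∈ X
  | a :: α, X => ∃ S : Finset C, S.card = a + 1 ∧ ∀ c ∈ S, winningSetMem α { w | c :: w ∈ X }

/-- `Σ y = m`: the sum of the letters of `y ∈ ℕ^ℕ` is finite and equals `m`. -/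
def sumEq (y : ℕ → ℕ) (m : ℕ) : Prop :=
  (Function.support y).Finite ∧ ∑ᶠ i, y i = m

/-- `Y ⊆ ℕ^ℕ` has finite coding dimension: the sums `Σ y`, `y ∈ Y`, are uniformly bounded. -/
def FiniteCodingDim (Y : Set (ℕ → ℕ)) : Prop :=
  ∃ d : ℕ, ∀ y ∈ Y, ∀ F : Finset ℕ, ∑ i ∈ F, y i ≤ d

/-- The set `{ν(y) : y ∈ Y, Σy = k} ⊆ ℕᵏ`: nondecreasing `k`-tuples `t` such that the word
whose letter at `j` is the number of occurrences of `j` in `t` belongs to `Y`. -/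
def nuSet (Y : Set (ℕ → ℕ)) (k : ℕ) : Set (Fin k → ℕ) :=
  { t | Monotone t ∧ (fun j => Set.ncard { i : Fin k | t i = j }) ∈ Y }

/-- `Y ⊆ ℕ^ℕ` is weakly `S`-codable if `{ν(y) : y ∈ Y, Σy = k}` is `S`-recognizable for
every `k`. -/
def WeaklySCodable {A : Type*} (S : ANS A) (Y : Set (ℕ → ℕ)) : Prop :=
  ∀ k : ℕ, S.Recognizable (nuSet Y k)

/-- `Y ⊆ ℕ^ℕ` is `S`-codable if it is weakly `S`-codable and has finite coding dimension. -/
def SCodable {A : Type*} (S : ANS A) (Y : Set (ℕ → ℕ)) : Prop :=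
  WeaklySCodable S Y ∧ FiniteCodingDim Y

/-- `P_{111}(Y)`: strictly increasing triples `(a, b, c)` such that the word with letter `1`
exactly at positions `a`, `b`, `c` and `0` elsewhere belongs to `Y`. -/
def P111 (Y : Set (ℕ → ℕ)) : Set (Fin 3 → ℕ) :=
  { t | t 0 < t 1 ∧ t 1 < t 2 ∧
        (fun j => if j = t 0 ∨ j = t 1 ∨ j = t 2 then 1 else 0) ∈ Y }

/-- `P_v(Y)` for a finite word `v` over `ℕ`: strictly increasing tuples `n` such that the
word with letter `v i` at position `n i` and `0` elsewhere belongs to `Y`. -/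
def PvSet (v : List ℕ) (Y : Set (ℕ → ℕ)) : Set (Fin v.length → ℕ) :=
  { n | StrictMono n ∧
        (fun j => ∑ i : Fin v.length, if n i = j then v.get i else 0) ∈ Y }

/-- `X` is sofic: the set of label sequences of right-infinite paths in a finite
edge-labeled graph. -/
def IsSofic {C : Type*} (X : Set (ℕ → C)) : Prop :=
  ∃ (V : Type) (_ : Fintype V) (E : Set (V × C × V)),
    X = { x | ∃ p : ℕ → V, ∀ n : ℕ, (p n, x n, p (n + 1)) ∈ E }

/-- The factor `x[a..b-1]` of an infinite word. -/
def segmentOf {C : Type*} (x : ℕ → C) (a b : ℕ) : List C :=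
  List.ofFn fun i : Fin (b - a) => x (a + i)

/-- `U · V^ω`: infinite words that decompose as a word of `U` followed by infinitely many
nonempty words of `V`. -/
def omegaIter {C : Type*} (U V : Set (List C)) : Set (ℕ → C) :=
  { x | ∃ k : ℕ → ℕ, StrictMono k ∧ segmentOf x 0 (k 0) ∈ U ∧
        ∀ i : ℕ, segmentOf x (k i) (k (i + 1)) ∈ V }

/-- `X ⊆ C^ℕ` is ω-regular: a finite union of sets `U · V^ω` with `U`, `V` regular. -/
def IsOmegaRegular {C : Type*} (X : Set (ℕ → C)) : Prop :=
  ∃ (n : ℕ) (U V : Fin n → Set (List C)),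
    (∀ i, IsRegularLang (U i) ∧ IsRegularLang (V i)) ∧
    X = ⋃ i, omegaIter (U i) (V i)

/-- The words `p₁ = a`, `p_{k+1} = p_k bᵏ p_k` (with `a = false`, `b = true`). -/
def pWord : ℕ → List Bool
  | 0 => []
  | 1 => [false]
  | (k + 2) => pWord (k + 1) ++ List.replicate (k + 1) true ++ pWord (k + 1)

/-- Combinatorial continuity of `φ` on `Y` for product topologies over discrete alphabets:
every finite prefix of `φ y` is determined by a finite prefix of `y`. -/
def ContOn {B C : Type*} (φ : (ℕ → B) → (ℕ → C)) (Y : Set (ℕ → B)) : Prop :=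
  ∀ y ∈ Y, ∀ n : ℕ, ∃ m : ℕ, ∀ y' ∈ Y, (∀ i < m, y' i = y i) → ∀ i < n, φ y' i = φ y i

/-! ### Closure properties of regular languages -/

theorem reg_congr {α : Type*} {L L' : Set (List α)} (h : IsRegularLang L)
    (e : ∀ w, w ∈ L ↔ w ∈ L') : IsRegularLang L' := by
  obtain ⟨σ, i, M, hM⟩ := h
  exact ⟨σ, i, M, fun w => (hM w).trans (e w)⟩

theorem reg_compl {α : Type*} {L : Set (List α)} (h : IsRegularLang L) :
    IsRegularLang {w | w ∉ L} := by
  obtain ⟨σ, i, M, hM⟩ := h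
  refine ⟨σ, i, ⟨M.step, M.start, M.acceptᶜ⟩, fun w => ?_⟩
  rw [Set.mem_ofPred_eq, ← hM w]
  rfl

theorem reg_inter {α : Type*} {L L' : Set (List α)} (h : IsRegularLang L)
    (h' : IsRegularLang L') : IsRegularLang {w | w ∈ L ∧ w ∈ L'} := by
  obtain ⟨σ, i, M, hM⟩ := h
  obtain ⟨σ', i', M', hM'⟩ := h'
  refine ⟨σ × σ', inferInstance, M.inter M', fun w => ?_⟩
  rw [DFA.accepts_inter, Set.mem_ofPred_eq, ← hM w, ← hM' w]
  rfl

theorem reg_univ {α : Type*} : IsRegularLang {_w : List α | True} :=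
  ⟨Unit, inferInstance, ⟨fun _ _ => (), (), Set.univ⟩, fun w => by simp [DFA.mem_accepts]⟩

theorem reg_finset {α ι : Type*} (s : Finset ι) {L : ι → Set (List α)}
    (h : ∀ i, IsRegularLang (L i)) : IsRegularLang {w | ∀ i ∈ s, w ∈ L i} := by
  classical
  induction s using Finset.induction_on with
  | empty => exact reg_congr reg_univ (by simp)
  | insert a s _ ih => exact reg_congr (reg_inter (h a) ih) (by simp)

theorem reg_forall {α ι : Type*} [Fintype ι] {L : ι → Set (List α)}
    (h : ∀ i, IsRegularLang (L i)) : IsRegularLang {w | ∀ i, w ∈ L i} :=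
  reg_congr (reg_finset Finset.univ h) (by simp)

theorem reg_comap {α β : Type*} (f : α → β) {L : Set (List β)} (h : IsRegularLang L) :
    IsRegularLang {w : List α | w.map f ∈ L} := by
  obtain ⟨σ, i, M, hM⟩ := h
  refine ⟨σ, i, M.comap f, fun w => ?_⟩
  rw [DFA.accepts_comap, Set.mem_ofPred_eq, ← hM]
  rfl

/-- The subset-construction automaton for the image under a letter map. -/
def projDFA {α β σ : Type*} (f : α → β) (M : DFA α σ) (I : Set σ) : DFA β (Set σ) where
  step T b := {q | ∃ p ∈ T, ∃ a, f a = b ∧ q = M.step p a}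
  start := I
  accept := {T | ∃ q ∈ T, q ∈ M.accept}

theorem projDFA_evalFrom {α β σ : Type*} (f : α → β) (M : DFA α σ) (I T : Set σ) (w : List β) :
    (projDFA f M I).evalFrom T w = {q | ∃ p ∈ T, ∃ u, u.map f = w ∧ q = M.evalFrom p u} := by
  induction w generalizing T with
  | nil => ext q; simp
  | cons b w ih =>
    rw [DFA.evalFrom_cons, ih]
    ext q
    constructor
    · rintro ⟨_, ⟨p, hp, a, rfl, rfl⟩, u, rfl, rfl⟩
      exact ⟨p, hp, a :: u, by simp, by simp⟩
    · rintro ⟨p, hp, u, hu, rfl⟩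
      cases u with
      | nil => simp at hu
      | cons a u =>
        simp only [List.map_cons, List.cons.injEq] at hu
        exact ⟨_, ⟨p, hp, a, hu.1, rfl⟩, u, hu.2, by simp⟩

theorem reg_proj {α β : Type*} (f : α → β) (e : β) {L : Set (List α)} (h : IsRegularLang L) :
    IsRegularLang {w : List β | ∃ u ∈ L, ∃ k, u.map f = List.replicate k e ++ w} := by
  classical
  obtain ⟨σ, i, M, hM⟩ := h
  refine ⟨Set σ, inferInstance,
    projDFA f M {q | ∃ u k, u.map f = List.replicate k e ∧ q = M.eval u}, fun w => ?_⟩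
  rw [DFA.mem_accepts]
  change (projDFA f M _).evalFrom _ w ∈ _ ↔ _
  rw [projDFA_evalFrom]
  constructor
  · rintro ⟨_, ⟨_, ⟨u, k, hu, rfl⟩, v, rfl, rfl⟩, hacc⟩
    refine ⟨u ++ v, ?_, k, by simp [hu]⟩
    rw [← hM, DFA.mem_accepts, DFA.eval, DFA.evalFrom_of_append]
    exact hacc
  · rintro ⟨u, hu, k, hk⟩
    obtain ⟨u1, u2, rfl, h1, h2⟩ := List.map_eq_append_iff.1 hk
    refine ⟨_, ⟨_, ⟨u1, k, h1, rfl⟩, u2, h2, rfl⟩, ?_⟩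
    rw [← hM, DFA.mem_accepts, DFA.eval, DFA.evalFrom_of_append] at hu
    exact hu

open Classical in
/-- Remove the leading occurrences of a letter. -/
noncomputable def stripL {α : Type*} (e : α) (w : List α) : List α := w.dropWhile (fun a => a = e)

theorem stripL_eq {α : Type*} (e : α) (w : List α) :
    ∃ k, w = List.replicate k e ++ stripL e w := by
  induction w with
  | nil => exact ⟨0, by simp [stripL]⟩
  | cons a w ih =>
    by_cases h : a = e
    · obtain ⟨k, hk⟩ := ih
      refine ⟨k + 1, ?_⟩
      have : stripL e (a :: w) = stripL e w := by simp [stripL, h]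
      rw [this, List.replicate_succ, List.cons_append, ← hk, h]
    · exact ⟨0, by simp [stripL, h]⟩

theorem stripL_head {α : Type*} (e : α) (w : List α) : (stripL e w).head? ≠ some e := by
  induction w with
  | nil => simp [stripL]
  | cons a w ih =>
    by_cases h : a = e
    · have : stripL e (a :: w) = stripL e w := by simp [stripL, h]
      rwa [this]
    · simp [stripL, h]

open Classical in
/-- The automaton ignoring leading occurrences of a letter. -/
noncomputable def stripDFA {α σ : Type*} (e : α) (M : DFA α σ) : DFA α (Option σ) where
  step q a := match q with
    | none => if a = e then none else some (M.step M.start a)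
    | some q => some (M.step q a)
  start := none
  accept := {q | q.getD M.start ∈ M.accept}

theorem reg_strip {α : Type*} (e : α) {L : Set (List α)} (h : IsRegularLang L) :
    IsRegularLang {w : List α | stripL e w ∈ L} := by
  obtain ⟨σ, i, M, hM⟩ := h
  refine ⟨Option σ, inferInstance, stripDFA e M, fun w => ?_⟩
  have h1 : ∀ (w : List α) q, (stripDFA e M).evalFrom (some q) w = some (M.evalFrom q w) := by
    intro w
    induction w with
    | nil => intro q; rfl
    | cons a w ih => intro q; rw [DFA.evalFrom_cons, DFA.evalFrom_cons, ← ih]; rfl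
  rw [Set.mem_ofPred_eq, ← hM, DFA.mem_accepts, DFA.mem_accepts, DFA.eval]
  change (stripDFA e M).evalFrom none w ∈ _ ↔ _
  induction w with
  | nil => rfl
  | cons a w ih =>
    rw [DFA.evalFrom_cons]
    by_cases h : a = e
    · have : stripL e (a :: w) = stripL e w := by simp [stripL, h]
      rw [this, ← ih]
      simp [stripDFA, h]
    · have h2 : stripL e (a :: w) = a :: w := by simp [stripL, h]
      have h3 : (stripDFA e M).step none a = some (M.step M.start a) := by simp [stripDFA, h]
      rw [h2, h3, h1]
      rfl

open Classical in
/-- Automaton testing that the first letter is not `e`. -/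
noncomputable def headDFA {α : Type*} (e : α) : DFA α (Option Bool) where
  step q a := match q with
    | none => if a = e then some false else some true
    | some q => some q
  start := none
  accept := {q | q ≠ some false}

theorem reg_head {α : Type*} (e : α) : IsRegularLang {w : List α | w.head? ≠ some e} := by
  refine ⟨Option Bool, inferInstance, headDFA e, fun w => ?_⟩
  have h1 : ∀ (w : List α) q, (headDFA e).evalFrom (some q) w = some q := by
    intro w
    induction w with
    | nil => intro q; rfl
    | cons a w ih => intro q; rw [DFA.evalFrom_cons]; exact ih q
  rw [DFA.mem_accepts, DFA.eval]
  cases w with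
  | nil => simp [headDFA]
  | cons a w =>
    rw [DFA.evalFrom_cons]
    by_cases h : a = e
    · have h3 : (headDFA e).step (headDFA e).start a = some false := by simp [headDFA, h]
      rw [h3, h1]
      simp [headDFA, h]
    · have h3 : (headDFA e).step (headDFA e).start a = some true := by simp [headDFA, h]
      rw [h3, h1]
      simp [headDFA, h]

/-! ### Padded words -/

theorem pad_strip {A : Type*} {k k' : ℕ} {l : List (Option A)} {r : List A}
    (h : List.replicate k none ++ l = List.replicate k' none ++ r.map some) :
    ∃ k'', l = List.replicate k'' none ++ r.map some := by
  induction k generalizing k' with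
  | zero => exact ⟨k', by simpa using h⟩
  | succ k ih =>
    cases k' with
    | zero => cases r <;> simp [List.replicate_succ] at h
    | succ k' => exact ih (k' := k') (by simpa [List.replicate_succ] using h)

theorem pad_inj {A : Type*} {k k' : ℕ} {r' r : List A}
    (h : List.replicate k none ++ r'.map some = List.replicate k' none ++ r.map some) :
    r' = r := by
  obtain ⟨j, hj⟩ := pad_strip h
  cases j with
  | zero => exact List.map_injective_iff.2 (Option.some_injective A) (by simpa using hj)
  | succ j => cases r' <;> simp [List.replicate_succ] at hj

/-- `w` is a padded form (with arbitrarily many leading paddings) of the tuple `t`. -/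
def IsPad {A V : Type} (S : ANS A) (w : List (V → Option A)) (t : V → ℕ) : Prop :=
  ∀ v, ∃ k, w.map (fun a => a v) = List.replicate k none ++ (S.rep (t v)).map some

/-- Recognizability in terms of arbitrarily padded words. -/
def Rec {A V : Type} (S : ANS A) (P : (V → ℕ) → Prop) : Prop :=
  ∃ L : Set (List (V → Option A)), IsRegularLang L ∧ ∀ w t, IsPad S w t → (w ∈ L ↔ P t)

theorem exists_cols {V B : Type} (N : ℕ) (col : V → List B) (h : ∀ v, (col v).length = N) :
    ∃ u : List (V → B), u.length = N ∧ ∀ v, u.map (fun a => a v) = col v := by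
  refine ⟨List.ofFn fun j : Fin N => fun v => (col v)[j.val]'(by rw [h v]; exact j.2),
    by simp, fun v => ?_⟩
  apply List.ext_getElem
  · simp [h]
  · intro i h1 h2
    simp

theorem cols_ext {V B : Type} [Nonempty V] {u u' : List (V → B)}
    (h : ∀ v, u.map (fun a => a v) = u'.map (fun a => a v)) : u = u' := by
  have hl : u.length = u'.length := by
    simpa using congrArg List.length (h (Classical.arbitrary V))
  apply List.ext_getElem hl
  intro i h1 h2
  funext v
  have := congrArg (fun l => l[i]?) (h v)
  simpa [h1, h2] using this

theorem IsPad.strip {A V : Type} {S : ANS A} {w : List (V → Option A)} {t : V → ℕ} {k : ℕ}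
    (h : IsPad S (List.replicate k (fun _ => none) ++ w) t) : IsPad S w t := by
  intro v
  obtain ⟨k', hk⟩ := h v
  rw [List.map_append, List.map_replicate] at hk
  exact pad_strip hk

theorem IsPad.unique {A V : Type} {S : ANS A} {w : List (V → Option A)} {t t' : V → ℕ}
    (h : IsPad S w t) (h' : IsPad S w t') : t = t' := by
  funext v
  obtain ⟨k, hk⟩ := h v
  obtain ⟨k', hk'⟩ := h' v
  exact S.inj (pad_inj (hk.symm.trans hk'))

theorem padOne_length {A : Type*} {M : ℕ} {w : List A} (h : w.length ≤ M) :
    (padOne M w).length = M := by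
  simp [padOne]; omega

theorem padTuple_length {A : Type*} {d : ℕ} (ws : Fin d → List A) :
    (padTuple ws).length = Finset.univ.sup fun i : Fin d => (ws i).length := by
  simp [padTuple]

theorem padTuple_col {A : Type*} {d : ℕ} (ws : Fin d → List A) (i : Fin d) :
    (padTuple ws).map (fun a => a i)
      = padOne (Finset.univ.sup fun i : Fin d => (ws i).length) (ws i) := by
  have hle : (ws i).length ≤ Finset.univ.sup fun i : Fin d => (ws i).length :=
    Finset.le_sup (f := fun i : Fin d => (ws i).length) (Finset.mem_univ i)
  have hl := padOne_length hle
  apply List.ext_getElem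
  · simp [padTuple, hl]
  · intro j h1 h2
    simp [padTuple, h2]

theorem isPad_padTuple {A : Type} {d : ℕ} (S : ANS A) (t : Fin d → ℕ) :
    IsPad S (padTuple fun i => S.rep (t i)) t := fun v => ⟨_, padTuple_col _ v⟩

theorem padTuple_head {A : Type*} {d : ℕ} (ws : Fin d → List A) :
    (padTuple ws).head? ≠ some (fun _ => none) := by
  intro h
  rcases hp : padTuple ws with _ | ⟨a, l⟩
  · simp [hp] at h
  · rw [hp] at h
    simp only [List.head?_cons, Option.some.injEq] at h
    have hlen := padTuple_length ws
    rw [hp] at hlen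
    have hne : (Finset.univ : Finset (Fin d)).Nonempty := by
      by_contra hc
      rw [Finset.not_nonempty_iff_eq_empty] at hc
      simp [hc] at hlen
    obtain ⟨i, -, hi⟩ := Finset.exists_mem_eq_sup Finset.univ hne (fun i => (ws i).length)
    have hc := padTuple_col ws i
    rw [hp, padOne, hi, h] at hc
    cases hw : ws i <;> simp [hw] at hc

theorem pad_eq_padTuple {A : Type} {d : ℕ} {S : ANS A} {w : List (Fin (d + 1) → Option A)}
    {t : Fin (d + 1) → ℕ} (h : IsPad S w t) (hh : w.head? ≠ some (fun _ => none)) :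
    w = padTuple fun i => S.rep (t i) := by
  choose k hk using h
  have hlen : ∀ v, w.length = k v + (S.rep (t v)).length := fun v => by
    simpa using congrArg List.length (hk v)
  have hw : w.length = Finset.univ.sup fun i => (S.rep (t i)).length := by
    apply le_antisymm
    · by_contra hc
      push Not at hc
      rcases w with _ | ⟨a, l⟩
      · simp at hc
      · apply hh
        simp only [List.head?_cons, Option.some.injEq]
        funext v
        have h1 : (S.rep (t v)).length ≤ Finset.univ.sup fun i => (S.rep (t i)).length :=
          Finset.le_sup (f := fun i => (S.rep (t i)).length) (Finset.mem_univ v)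
        have h2 := hlen v
        have h3 := hk v
        obtain ⟨j, hj⟩ : ∃ j, k v = j + 1 := ⟨k v - 1, by omega⟩
        rw [hj, List.replicate_succ] at h3
        simp at h3
        exact h3.1
    · apply Finset.sup_le
      intro v _
      have := hlen v
      omega
  apply cols_ext
  intro v
  rw [hk v, padTuple_col, padOne, ← hw]
  congr 2
  have := hlen v
  omega

/-! ### First-order closure properties -/

section closure
variable {A V : Type} {S : ANS A}

theorem Rec.congr {P Q : (V → ℕ) → Prop} (h : Rec S P) (e : ∀ t, P t ↔ Q t) : Rec S Q := by
  obtain ⟨L, hL, h⟩ := h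
  exact ⟨L, hL, fun w t hw => (h w t hw).trans (e t)⟩

theorem Rec.not {P : (V → ℕ) → Prop} (h : Rec S P) : Rec S (fun t => ¬ P t) := by
  obtain ⟨L, hL, h⟩ := h
  exact ⟨_, reg_compl hL, fun w t hw => not_congr (h w t hw)⟩

theorem Rec.and {P Q : (V → ℕ) → Prop} (h : Rec S P) (h' : Rec S Q) :
    Rec S (fun t => P t ∧ Q t) := by
  obtain ⟨L, hL, h⟩ := h
  obtain ⟨L', hL', h'⟩ := h'
  exact ⟨_, reg_inter hL hL', fun w t hw => and_congr (h w t hw) (h' w t hw)⟩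

theorem Rec.imp {P Q : (V → ℕ) → Prop} (h : Rec S P) (h' : Rec S Q) :
    Rec S (fun t => P t → Q t) :=
  (h.and h'.not).not.congr fun t => by tauto

theorem Rec.iff {P Q : (V → ℕ) → Prop} (h : Rec S P) (h' : Rec S Q) :
    Rec S (fun t => P t ↔ Q t) :=
  ((h.imp h').and (h'.imp h)).congr fun t => by tauto

theorem Rec.const (p : Prop) : Rec S (fun _ : V → ℕ => p) := by
  by_cases hp : p
  · exact ⟨_, reg_univ, fun w t _ => by simp [hp]⟩
  · exact ⟨_, reg_compl reg_univ, fun w t _ => by simp [hp]⟩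

theorem Rec.forall_fin {ι : Type} [Fintype ι] {P : ι → (V → ℕ) → Prop}
    (h : ∀ i, Rec S (P i)) : Rec S (fun t => ∀ i, P i t) := by
  choose L hL h using h
  exact ⟨_, reg_forall hL, fun w t hw => forall_congr' fun i => h i w t hw⟩

theorem Rec.reindex {U : Type} (f : U → V) {P : (U → ℕ) → Prop} (h : Rec S P) :
    Rec S (fun t : V → ℕ => P (fun u => t (f u))) := by
  obtain ⟨L, hL, h⟩ := h
  refine ⟨_, reg_comap (fun (a : V → Option A) u => a (f u)) hL, fun w t hw => h _ _ ?_⟩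
  intro u
  obtain ⟨k, hk⟩ := hw (f u)
  exact ⟨k, by rw [← hk, List.map_map]; rfl⟩

/-- Arbitrarily padded representations. -/
def ValidLang (S : ANS A) : Set (List (Option A)) :=
  {w | ∃ k m, w = List.replicate k none ++ (S.rep m).map some}

theorem reg_valid (hadd : S.Addable) : IsRegularLang (ValidLang S) := by
  refine reg_congr (reg_strip none (reg_proj (fun a : Fin 3 → Option A => a 1) none hadd)) ?_
  intro w
  obtain ⟨k1, hk1⟩ := stripL_eq none w
  have hhead := stripL_head none w
  constructor
  · rintro ⟨_, ⟨t, ht, rfl⟩, k, hk⟩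
    obtain ⟨k', hk'⟩ := isPad_padTuple S t 1
    rw [hk] at hk'
    obtain ⟨k'', h⟩ := pad_strip hk'
    refine ⟨k1 + k'', t 1, ?_⟩
    rw [List.replicate_add, List.append_assoc, ← h, ← hk1]
  · rintro ⟨k, m, hk⟩
    rw [hk1] at hk
    obtain ⟨k'', h⟩ := pad_strip hk
    have h0 : k'' = 0 := by
      cases k'' with
      | zero => rfl
      | succ j => rw [h] at hhead; simp [List.replicate_succ] at hhead
    obtain ⟨k', hk'⟩ := isPad_padTuple S ![0, m, m] 1
    refine ⟨_, ⟨![0, m, m], by simp, rfl⟩, k', ?_⟩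
    rw [hk', h, h0]
    simp

theorem Rec.ex {ι : Type} [Fintype ι] (hadd : S.Addable) {P : (V → ℕ) → (ι → ℕ) → Prop}
    (h : Rec S (fun t : V ⊕ ι → ℕ => P (fun v => t (Sum.inl v)) (fun i => t (Sum.inr i)))) :
    Rec S (fun t : V → ℕ => ∃ p, P t p) := by
  obtain ⟨L, hL, h⟩ := h
  refine ⟨_, reg_proj (fun (a : V ⊕ ι → Option A) v => a (Sum.inl v)) (fun _ => none)
    (reg_inter hL (reg_forall fun i : ι =>
      reg_comap (fun a : V ⊕ ι → Option A => a (Sum.inr i)) (reg_valid hadd))), ?_⟩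
  intro w t hw
  constructor
  · rintro ⟨u, ⟨huL, hv⟩, k, hk⟩
    choose j p hp using hv
    refine ⟨p, (h u (Sum.elim t p) ?_).1 huL⟩
    rintro (v | i)
    · obtain ⟨k', hk'⟩ := hw v
      refine ⟨k + k', ?_⟩
      have := congrArg (List.map (fun a : V → Option A => a v)) hk
      rw [List.map_map, List.map_append, hk', List.map_replicate] at this
      rw [List.replicate_add, List.append_assoc]
      exact this
    · exact ⟨j i, hp i⟩
  · rintro ⟨p, hp⟩
    set N := w.length + Finset.univ.sup fun i => (S.rep (p i)).length with hN
    set k := N - w.length with hk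
    have hle : ∀ i, (S.rep (p i)).length ≤ N := fun i =>
      (Finset.le_sup (f := fun i => (S.rep (p i)).length) (Finset.mem_univ i)).trans
        (Nat.le_add_left _ _)
    obtain ⟨u, hul, hu⟩ := exists_cols N (Sum.elim
      (fun v : V => List.replicate k none ++ w.map (fun a => a v))
      (fun i : ι => padOne N (S.rep (p i)))) (by
        rintro (v | i)
        · simp; omega
        · exact padOne_length (hle i))
    have hpad : IsPad S u (Sum.elim t p) := by
      rintro (v | i)
      · obtain ⟨k', hk'⟩ := hw v
        refine ⟨k + k', ?_⟩
        rw [hu, List.replicate_add, List.append_assoc]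
        simp [hk']
      · exact ⟨_, hu (Sum.inr i)⟩
    refine ⟨u, ⟨(h u _ hpad).2 hp, fun i => ?_⟩, k, ?_⟩
    · exact ⟨_, p i, hu (Sum.inr i)⟩
    · apply List.ext_getElem
      · simp; omega
      · intro i h1 h2
        funext v
        have := congrArg (fun l => l[i]?) (hu (Sum.inl v))
        have h3 : i < u.length := by simpa using h1
        simp only [Sum.elim_inl, List.getElem?_map, List.getElem?_eq_getElem h3,
          Option.map_some] at this
        rw [List.getElem_map, ← Option.some_inj, this]
        have h4 := List.getElem?_eq_getElem h2
        have h5 : (List.replicate k (none : Option A) ++ List.map (fun a => a v) w)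
          = (List.replicate k (fun _ => none) ++ w).map (fun a : V → Option A => a v) := by simp
        rw [h5, List.getElem?_map, h4]
        rfl

theorem Rec.ex1 (hadd : S.Addable) {P : (V → ℕ) → ℕ → Prop}
    (h : Rec S (fun t : V ⊕ Unit → ℕ => P (fun v => t (Sum.inl v)) (t (Sum.inr ())))) :
    Rec S (fun t : V → ℕ => ∃ m, P t m) :=
  (Rec.ex (ι := Unit) hadd (P := fun t p => P t (p ())) h).congr fun t =>
    ⟨fun ⟨p, hp⟩ => ⟨p (), hp⟩, fun ⟨m, hm⟩ => ⟨fun _ => m, hm⟩⟩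

theorem Rec.all1 (hadd : S.Addable) {P : (V → ℕ) → ℕ → Prop}
    (h : Rec S (fun t : V ⊕ Unit → ℕ => P (fun v => t (Sum.inl v)) (t (Sum.inr ())))) :
    Rec S (fun t : V → ℕ => ∀ m, P t m) :=
  (Rec.ex1 hadd (P := fun t m => ¬ P t m) h.not).not.congr fun t => by simp

theorem Rec.add (hadd : S.Addable) (a b c : V) : Rec S (fun t : V → ℕ => t a + t b = t c) := by
  have h : Rec S (fun t : Fin 3 → ℕ => t 0 + t 1 = t 2) := by
    refine ⟨_, reg_strip (fun _ => none) hadd, fun w t hw => ?_⟩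
    obtain ⟨k, hk⟩ := stripL_eq (fun _ => none) w
    have hhead := stripL_head (fun _ => none) w
    have hpad : IsPad S (stripL (fun _ => none) w) t := by
      rw [hk] at hw; exact hw.strip
    constructor
    · rintro ⟨t', ht', he⟩
      rw [he] at hpad
      rw [hpad.unique (isPad_padTuple S t')]
      exact ht'
    · intro ht
      exact ⟨t, ht, pad_eq_padTuple hpad hhead⟩
  exact h.reindex ![a, b, c]

theorem Rec.le (hadd : S.Addable) (a b : V) : Rec S (fun t : V → ℕ => t a ≤ t b) :=
  (Rec.ex1 hadd (P := fun t m => t a + m = t b)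
    (Rec.add hadd (Sum.inl a) (Sum.inr ()) (Sum.inl b))).congr fun t =>
      ⟨fun ⟨m, hm⟩ => by omega, fun h => ⟨t b - t a, by omega⟩⟩

theorem Rec.lt (hadd : S.Addable) (a b : V) : Rec S (fun t : V → ℕ => t a < t b) :=
  (Rec.le hadd b a).not.congr fun t => by simp

/-- A DFA on `A` ignoring padding symbols. -/
def optDFA {σ : Type} (M : DFA A σ) (F : Set σ) : DFA (Option A) σ where
  step q a := match a with
    | none => q
    | some a => M.step q a
  start := M.start
  accept := F

theorem Rec.aut {x : ℕ → Bool} (hx : SAutomatic S x) (a : V) :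
    Rec S (fun t : V → ℕ => x (t a) = true) := by
  obtain ⟨Q, hQ, M, τ, hM⟩ := hx
  refine ⟨_, reg_comap (fun c : V → Option A => c a)
    (L := {w | w ∈ (optDFA M {q | τ q = true}).accepts}) ⟨Q, hQ, optDFA M {q | τ q = true}, fun w => Iff.rfl⟩, ?_⟩
  intro w t hw
  obtain ⟨k, hk⟩ := hw a
  have h1 : ∀ (l : List A) q, (optDFA M {q | τ q = true}).evalFrom q (l.map some)
      = M.evalFrom q l := by
    intro l
    induction l with
    | nil => intro q; rfl
    | cons b l ih => intro q; rw [List.map_cons, DFA.evalFrom_cons, DFA.evalFrom_cons, ih]; rfl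
  have h2 : ∀ k, (optDFA M {q | τ q = true}).evalFrom M.start (List.replicate k none)
      = M.start := by
    intro k
    induction k with
    | zero => rfl
    | succ k ih => rw [List.replicate_succ, DFA.evalFrom_cons]; exact ih
  rw [Set.mem_ofPred_eq, Set.mem_ofPred_eq, hk, DFA.mem_accepts, DFA.eval, DFA.evalFrom_of_append]
  change τ ((optDFA M {q | τ q = true}).evalFrom
    ((optDFA M {q | τ q = true}).evalFrom M.start _) _) = true ↔ _
  rw [h2, h1]
  beta_reduce
  rw [← hM]
  rfl

theorem Rec.aut_add (hadd : S.Addable) {x : ℕ → Bool} (hx : SAutomatic S x) (a b : V) :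
    Rec S (fun t : V → ℕ => x (t a + t b) = true) :=
  (Rec.ex1 hadd (P := fun t m => t a + t b = m ∧ x m = true)
    ((Rec.add hadd (Sum.inl a) (Sum.inl b) (Sum.inr ())).and
      (Rec.aut hx (Sum.inr ())))).congr fun t => by simp

theorem recognizable_of_rec (hadd : S.Addable) {d : ℕ} {Y : Set (Fin (d + 1) → ℕ)}
    (h : Rec S (fun t => t ∈ Y)) : S.Recognizable Y := by
  obtain ⟨L, hL, h⟩ := h
  refine reg_congr (reg_inter hL (reg_inter (reg_head fun _ => none)
    (reg_forall fun i : Fin (d + 1) =>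
      reg_comap (fun a : Fin (d + 1) → Option A => a i) (reg_valid hadd)))) ?_
  intro w
  constructor
  · rintro ⟨hwL, hh, hv⟩
    choose j p hp using hv
    have hpad : IsPad S w p := fun v => ⟨j v, hp v⟩
    exact ⟨p, (h w p hpad).1 hwL, pad_eq_padTuple hpad hh⟩
  · rintro ⟨t, ht, rfl⟩
    have hpad := isPad_padTuple S t
    refine ⟨(h _ _ hpad).2 ht, padTuple_head _, fun i => ?_⟩
    obtain ⟨k, hk⟩ := hpad i
    exact ⟨k, _, hk⟩

end closure

/-! ### The winning shift -/

/-- First-order condition describing membership in the winning shift. -/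
def WinCond (x : ℕ → Bool) (t : Fin 3 → ℕ) : Prop :=
  ∀ n, ∃ p : (Fin 3 → Bool) → ℕ,
    (∀ s j, x (p s + t j) = s j) ∧
    ∀ s s' : Fin 3 → Bool, ∀ i, i < n → (∀ j, t j ≤ i → s j = s' j) → x (p s + i) = x (p s' + i)

theorem winCond_rec {A : Type} {S : ANS A} (hadd : S.Addable) {x : ℕ → Bool}
    (hx : SAutomatic S x) : Rec S (fun t : Fin 3 → ℕ => WinCond x t) := by
  unfold WinCond
  refine Rec.all1 hadd ?_
  refine Rec.ex hadd ?_
  refine Rec.and ?_ ?_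
  · refine Rec.forall_fin fun s => Rec.forall_fin fun j => ?_
    have h := Rec.aut_add hadd hx (V := (Fin 3 ⊕ Unit) ⊕ (Fin 3 → Bool))
      (Sum.inr s) (Sum.inl (Sum.inl j))
    cases hs : s j
    · exact h.not.congr fun t => by simp
    · exact h
  · refine Rec.forall_fin fun s => Rec.forall_fin fun s' => ?_
    refine Rec.all1 hadd ?_
    refine Rec.imp (Rec.lt hadd _ _) ?_
    refine Rec.imp (Rec.forall_fin fun j => Rec.imp (Rec.le hadd _ _) (Rec.const _)) ?_
    refine ((Rec.aut_add hadd hx (Sum.inl (Sum.inr s)) (Sum.inr ())).iff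
      (Rec.aut_add hadd hx (Sum.inl (Sum.inr s')) (Sum.inr ()))).congr fun t => ?_
    exact Bool.eq_iff_iff.symm

open Classical in
/-- The branch of a tree following the wishes `c`. -/
noncomputable def branchW (T : Set (List Bool)) (c : ℕ → Bool) : ℕ → List Bool
  | 0 => []
  | n + 1 => branchW T c n ++ [if branchW T c n ++ [c n] ∈ T then c n else !(c n)]

open Classical in
/-- The letters of the branch. -/
noncomputable def branchL (T : Set (List Bool)) (c : ℕ → Bool) (n : ℕ) : Bool :=
  if branchW T c n ++ [c n] ∈ T then c n else !(c n)

theorem branchW_succ (T : Set (List Bool)) (c : ℕ → Bool) (n : ℕ) :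
    branchW T c (n + 1) = branchW T c n ++ [branchL T c n] := rfl

theorem branchW_length (T : Set (List Bool)) (c : ℕ → Bool) (n : ℕ) :
    (branchW T c n).length = n := by
  induction n with
  | zero => rfl
  | succ n ih => simp [branchW_succ, ih]

theorem branchW_eq (T : Set (List Bool)) (c : ℕ → Bool) (n : ℕ) :
    branchW T c n = List.ofFn fun i : Fin n => branchL T c i := by
  induction n with
  | zero => simp [branchW]
  | succ n ih => rw [branchW_succ, ih, List.ofFn_succ', List.concat_eq_append]; rfl

theorem win_imp {x : ℕ → Bool} {t : Fin 3 → ℕ} {α : ℕ → ℕ} (ht : Function.Injective t)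
    (hα1 : ∀ j, α (t j) = 1) (hα0 : ∀ l, (∀ j, l ≠ t j) → α l = 0)
    (h : α ∈ winningShift (orbitClosure x)) : WinCond x t := by
  obtain ⟨T, hnil, hpre, hcard, hbr⟩ := h
  have hmem : ∀ c n, branchW T c n ∈ T := by
    intro c n
    induction n with
    | zero => exact hnil
    | succ n ih =>
      rw [branchW_succ, branchL]
      split_ifs with hc
      · exact hc
      · by_contra hc'
        have := hcard _ ih
        have he : {b : Bool | branchW T c n ++ [b] ∈ T} = ∅ := by
          ext b
          rcases Bool.eq_or_eq_not b (c n) with hb | hb <;> simp [hb, hc, hc']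
        rw [he] at this
        simp at this
  have hone : ∀ c j, branchL T c (t j) = c (t j) := by
    intro c j
    have h2 := hcard _ (hmem c (t j))
    rw [branchW_length, hα1] at h2
    have : {b : Bool | branchW T c (t j) ++ [b] ∈ T} = Set.univ := by
      apply Set.eq_of_subset_of_ncard_le (Set.subset_univ _)
      rw [h2, Set.ncard_univ]; simp
    have h3 : c (t j) ∈ {b : Bool | branchW T c (t j) ++ [b] ∈ T} := by rw [this]; trivial
    have h4 : branchW T c (t j) ++ [c (t j)] ∈ T := h3
    rw [branchL, if_pos h4]
  have hagree : ∀ c c' n, (∀ j, t j < n → c (t j) = c' (t j)) → branchW T c n = branchW T c' n := by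
    intro c c' n
    induction n with
    | zero => intro _; rfl
    | succ n ih =>
      intro hc
      have ih := ih fun j hj => hc j (by omega)
      rw [branchW_succ, branchW_succ, ih]
      congr 2
      by_cases hn : ∃ j, n = t j
      · obtain ⟨j, rfl⟩ := hn
        rw [hone, hone, hc j (by omega)]
      · push Not at hn
        have h2 := hcard _ (hmem c n)
        rw [branchW_length, hα0 n hn, Set.ncard_eq_one] at h2
        obtain ⟨b, hb⟩ := h2
        have h3 : branchL T c n ∈ {b : Bool | branchW T c n ++ [b] ∈ T} := hmem c (n + 1)
        have h4 : branchL T c' n ∈ {b : Bool | branchW T c n ++ [b] ∈ T} := by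
          rw [ih]; exact hmem c' (n + 1)
        rw [hb] at h3 h4
        exact h3.trans h4.symm
  have horb : ∀ c, branchL T c ∈ orbitClosure x := fun c =>
    hbr _ fun n => by rw [← branchW_eq]; exact hmem c n
  intro n
  have hs : ∀ s : Fin 3 → Bool, ∃ c : ℕ → Bool, ∀ j, c (t j) = s j := fun s =>
    ⟨Function.extend t s (fun _ => false), fun j => ht.extend_apply _ _ _⟩
  choose c hc using hs
  set N := n + t 0 + t 1 + t 2 + 1 with hN
  choose p hp using fun s => horb (c s) N
  refine ⟨p, fun s j => ?_, fun s s' i hi hss => ?_⟩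
  · rw [← hp s (t j) (by fin_cases j <;> simp <;> omega), hone, hc]
  · rw [← hp s i (by omega), ← hp s' i (by omega)]
    have := hagree (c s) (c s') (i + 1) fun j hj => by
      rw [hc, hc]; exact hss j (by omega)
    rw [branchW_succ, branchW_succ] at this
    have := List.append_inj_right' this rfl
    simpa using this

theorem win_of {x : ℕ → Bool} {t : Fin 3 → ℕ} {α : ℕ → ℕ} (ht : Function.Injective t)
    (hα1 : ∀ j, α (t j) = 1) (hα0 : ∀ l, (∀ j, l ≠ t j) → α l = 0)
    (h : WinCond x t) : α ∈ winningShift (orbitClosure x) := by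
  classical
  choose p hp1 hp2 using h
  let U : Ultrafilter ℕ := Filter.hyperfilter ℕ
  let y : (Fin 3 → Bool) → ℕ → Bool := fun s i => decide (∀ᶠ n in U, x (p n s + i) = true)
  have hy : ∀ s i, ∀ᶠ n in U, y s i = x (p n s + i) := by
    intro s i
    by_cases hc : ∀ᶠ n in U, x (p n s + i) = true
    · have : y s i = true := by simp [y, hc]
      rw [this]
      exact hc.mono fun n hn => hn.symm
    · have : y s i = false := by simp [y, hc]
      rw [this]
      exact (Ultrafilter.eventually_not.2 hc).mono fun n hn => by
        simp only [Bool.not_eq_true] at hn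
        exact hn.symm
  have hlarge : ∀ i, ∀ᶠ n in (U : Filter ℕ), i < n := by
    intro i
    apply Filter.Eventually.filter_mono (Filter.hyperfilter_le_cofinite)
    rw [Nat.cofinite_eq_atTop]
    exact Filter.eventually_gt_atTop i
  have hy1 : ∀ s j, y s (t j) = s j := by
    intro s j
    obtain ⟨n, hn⟩ := (hy s (t j)).exists
    rw [hn, hp1]
  have hy2 : ∀ s s' i, (∀ j, t j ≤ i → s j = s' j) → y s i = y s' i := by
    intro s s' i hss
    obtain ⟨n, ⟨h1, h2⟩, h3⟩ := (((hy s i).and (hy s' i)).and (hlarge i)).exists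
    rw [h1, h2, hp2 n s s' i h3 hss]
  have hyO : ∀ s n, ∃ m, ∀ i < n, y s i = x (m + i) := by
    intro s n
    have : ∀ᶠ k in U, ∀ i ∈ Finset.range n, y s i = x (p k s + i) :=
      (Filter.eventually_all_finset _).2 fun i _ => hy s i
    obtain ⟨k, hk⟩ := this.exists
    exact ⟨p k s, fun i hi => hk i (Finset.mem_range.2 hi)⟩
  refine ⟨{w | ∃ s, ∀ i (hi : i < w.length), w[i] = y s i}, ?_, ?_, ?_, ?_⟩
  · exact ⟨fun _ => false, by simp⟩
  · rintro u v ⟨s, hs⟩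
    refine ⟨s, fun i hi => ?_⟩
    have := hs i (by simp; omega)
    rwa [List.getElem_append_left hi] at this
  · rintro w ⟨s, hs⟩
    by_cases hl : ∃ j, w.length = t j
    · obtain ⟨j, hj⟩ := hl
      rw [hj, hα1]
      have : {c : Bool | w ++ [c] ∈ {w : List Bool | ∃ s, ∀ i (hi : i < w.length), w[i] = y s i}}
          = Set.univ := by
        ext c
        simp only [Set.mem_ofPred_eq, Set.mem_univ, iff_true]
        refine ⟨fun j' => if t j' < w.length then s j' else c, fun i hi => ?_⟩
        by_cases hi' : i < w.length
        · rw [List.getElem_append_left hi', hs i hi']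
          apply hy2
          intro j' hj'
          beta_reduce
          rw [if_pos (by omega)]
        · have : i = t j := by simp at hi; omega
          subst this
          rw [hy1]
          beta_reduce
          rw [if_neg (by omega), List.getElem_append_right (by omega)]
          simp
      rw [this, Set.ncard_univ]
      simp
    · push Not at hl
      rw [hα0 _ hl, Set.ncard_eq_one]
      refine ⟨y s w.length, ?_⟩
      ext c
      simp only [Set.mem_ofPred_eq, Set.mem_singleton_iff]
      constructor
      · rintro ⟨s', hs'⟩
        have h1 := hs' w.length (by simp)
        rw [List.getElem_append_right (le_refl _)] at h1
        simp only [Nat.sub_self, List.getElem_cons_zero] at h1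
        rw [h1]
        apply hy2
        intro j hj
        have hj : t j < w.length := lt_of_le_of_ne hj (hl j).symm
        have h2 := hs' (t j) (by simp; omega)
        rw [List.getElem_append_left hj, hs _ hj, hy1, hy1] at h2
        exact h2.symm
      · rintro rfl
        refine ⟨s, fun i hi => ?_⟩
        by_cases hi' : i < w.length
        · rw [List.getElem_append_left hi', hs i hi']
        · have : i = w.length := by simp at hi; omega
          subst this
          simp
  · intro z hz n
    obtain ⟨s, hs⟩ := hz n
    obtain ⟨m, hm⟩ := hyO s n
    refine ⟨m, fun i hi => ?_⟩
    rw [← hm i hi, ← hs i (by simpa using hi)]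
    simp

/-- If `S` is an addable ANS and `x ∈ {0,1}^ℕ` is `S`-automatic, then
`P_{111}(W(O(x))) ⊆ ℕ³` is `S`-recognizable. -/
theorem stmt2 {A : Type} [Fintype A] (S : ANS A) (hadd : S.Addable)
    (x : ℕ → Bool) (hx : SAutomatic S x) :
    S.Recognizable (P111 (winningShift (orbitClosure x))) := by
  apply recognizable_of_rec hadd
  have h := ((Rec.lt hadd (0 : Fin 3) 1).and (Rec.lt hadd (1 : Fin 3) 2)).and (winCond_rec hadd hx)
  refine h.congr fun t => ?_
  have key : t 0 < t 1 → t 1 < t 2 → (WinCond x t ↔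
      (fun j => if j = t 0 ∨ j = t 1 ∨ j = t 2 then 1 else 0) ∈ winningShift (orbitClosure x)) := by
    intro h1 h2
    have ht : Function.Injective t := by
      intro i j hij
      fin_cases i <;> fin_cases j <;> first | rfl | (exfalso; simp at hij; omega)
    have hα1 : ∀ j, (fun j => if j = t 0 ∨ j = t 1 ∨ j = t 2 then 1 else 0) (t j) = 1 := by
      intro j
      fin_cases j <;> simp
    have hα0 : ∀ l, (∀ j, l ≠ t j) →
        (fun j => if j = t 0 ∨ j = t 1 ∨ j = t 2 then 1 else 0) l = 0 := by
      intro l hl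
      simp [hl]
    exact ⟨win_of ht hα1 hα0, win_imp ht hα1 hα0⟩
  constructor
  · rintro ⟨⟨h1, h2⟩, h3⟩
    exact ⟨h1, h2, (key h1 h2).1 h3⟩
  · rintro ⟨h1, h2, h3⟩
    exact ⟨⟨h1, h2⟩, (key h1 h2).2 h3⟩
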